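/- Let B ⊂ ℝ⁴ be open, f = (f¹,f²,f³): B → ℝ³ and A = (A⁴,…,A⁷): B → ℝ⁴ smooth, with w_a(y), F_∇^S, F_∇^B, F_∇ = F_∇^B + F_∇^S and β = −√−1·F_∇^B as in the context. Then the following are equivalent: (1) φ(w_a(y),w_b(y),w_c(y)) = 0 for all 4 ≤ a < b < c ≤ 7 and every y ∈ B (the graph S is coassociative with an appropriate orientation) and, for every y ∈ B, the 2-form β(y) on ℝ⁴ is anti-self-dual with respect to the induced metric g(y) (g_{ab}(y) = ⟨w_a(y),w_b(y)⟩) and the orientation of ℝ⁴ that is sign(*₇φ(w₄(y),…,w₇(y))) times the standard one (this sign is well defined since *₇φ(w₄,…,w₇) ≠ 0 when S is coassociative); (2) F_∇³/6 + F_∇ ∧ *₇φ = 0 at every point; (3) F_∇³/6 + F_∇ ∧ *₇φ = 0 and φ ∧ *₇(F_∇²) = 0 at every point. -/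

import Mathlib

open scoped BigOperators

noncomputable section

namespace FMpaper

variable {K : Type*} [NormedField K] [NormedAlgebra ℝ K]

/-- Coefficient model for the exterior algebra of `(ℝⁿ)*` with scalars in `K`:
a form is given by its coefficients on the basis `e^S`, `S ⊆ {0, …, n-1}` sorted. -/
abbrev Form (K : Type*) (n : ℕ) := Finset (Fin n) → K

variable {n : ℕ}

/-- Sign such that `e^s ∧ e^t = signMerge s t • e^(s ∪ t)` for disjoint sorted `s, t`. -/
def signMerge (s t : Finset (Fin n)) : K :=
  (-1 : K) ^ (((s ×ˢ t).filter (fun p => p.2 < p.1)).card)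

/-- Wedge product. -/
def wedge (α β : Form K n) : Form K n :=
  fun u => ∑ s ∈ u.powerset, signMerge s (u \ s) * α s * β (u \ s)

/-- Hodge star operator (for the standard inner product and orientation `e^{0⋯(n-1)}`). -/
def hstar (α : Form K n) : Form K n :=
  fun t => signMerge tᶜ t * α tᶜ

/-- Interior product with the basis vector `e_μ`. -/
def iprodB (μ : Fin n) (α : Form K n) : Form K n :=
  fun t => if μ ∈ t then 0
    else (-1 : K) ^ ((t.filter (fun j => j < μ)).card) * α (insert μ t)

/-- Interior product with the vector `v`. -/
def iprod (v : Fin n → K) (α : Form K n) : Form K n :=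
  fun t => ∑ μ, v μ * iprodB μ α t

/-- The basis covector `e^i` as a 1-form. -/
def e1 (i : Fin n) : Form K n := fun s => if s = {i} then 1 else 0

/-- The covector `v♭` dual to a vector `v`. -/
def flat (v : Fin n → K) : Form K n := ∑ i, v i • e1 i

/-- The vector `α♯` dual to a 1-form `α`. -/
def sharp1 (α : Form K n) : Fin n → K := fun i => α {i}

/-- The inner product of forms (extended `K`-bilinearly). -/
def inner' (α β : Form K n) : K := ∑ s, α s * β s

/-- The (Euclidean) norm of a form; for an `√-1 ℝ`-valued form `√-1 γ` this is `‖γ‖`. -/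
def fnorm (α : Form K n) : ℝ := Real.sqrt (∑ s, ‖α s‖ ^ 2)

/-- `α` is homogeneous of degree `k`. -/
def isGrade (k : ℕ) (α : Form K n) : Prop := ∀ s, s.card ≠ k → α s = 0

/-- Evaluation of a `k`-form on `k` vectors. -/
def evalForm {k : ℕ} (α : Form K n) (v : Fin k → (Fin n → K)) : K :=
  ∑ s : Finset (Fin n), α s *
    (if h : s.card = k then
      Matrix.det (Matrix.of fun i j => v i ((s.orderIsoOfFin h j : Fin n))) else 0)

/-- The matrix of the skew-symmetric endomorphism `γ♯` associated with a 2-form `γ`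
via `⟨γ♯ u, v⟩ = γ(u, v)`. -/
def mat2 (γ : Form K n) : Matrix (Fin n) (Fin n) K :=
  Matrix.of fun i j => if i < j then γ {i, j} else if j < i then - γ {i, j} else 0

/-- The standard `G₂` 3-form `φ = e^{123}+e^{145}+e^{167}+e^{246}−e^{257}−e^{347}−e^{356}`
on `ℝ⁷` (indices `1, …, 7` shifted to `0, …, 6`). -/
def phi7 : Form K 7 := fun s =>
  if s = ({0, 1, 2} : Finset (Fin 7)) then 1
  else if s = ({0, 3, 4} : Finset (Fin 7)) then 1
  else if s = ({0, 5, 6} : Finset (Fin 7)) then 1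
  else if s = ({1, 3, 5} : Finset (Fin 7)) then 1
  else if s = ({1, 4, 6} : Finset (Fin 7)) then -1
  else if s = ({2, 3, 6} : Finset (Fin 7)) then -1
  else if s = ({2, 4, 5} : Finset (Fin 7)) then -1
  else 0

/-- `*₇φ = e^{4567}+e^{2367}+e^{2345}+e^{1357}−e^{1346}−e^{1256}−e^{1247}` on `ℝ⁷`. -/
def psi7 : Form K 7 := fun s =>
  if s = ({3, 4, 5, 6} : Finset (Fin 7)) then 1
  else if s = ({1, 2, 5, 6} : Finset (Fin 7)) then 1
  else if s = ({1, 2, 3, 4} : Finset (Fin 7)) then 1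
  else if s = ({0, 2, 4, 6} : Finset (Fin 7)) then 1
  else if s = ({0, 2, 3, 5} : Finset (Fin 7)) then -1
  else if s = ({0, 1, 4, 5} : Finset (Fin 7)) then -1
  else if s = ({0, 1, 3, 6} : Finset (Fin 7)) then -1
  else 0

/-- The `G₂` 3-form `φ` on `V = span{e₁, …, e₇} ⊂ ℝ⁸`, regarded as a form on `ℝ⁸`
annihilated by `i(e₀)` (indices `1, …, 7` of `ℝ⁸`). -/
def phi8 : Form K 8 := fun s =>
  if s = ({1, 2, 3} : Finset (Fin 8)) then 1
  else if s = ({1, 4, 5} : Finset (Fin 8)) then 1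
  else if s = ({1, 6, 7} : Finset (Fin 8)) then 1
  else if s = ({2, 4, 6} : Finset (Fin 8)) then 1
  else if s = ({2, 5, 7} : Finset (Fin 8)) then -1
  else if s = ({3, 4, 7} : Finset (Fin 8)) then -1
  else if s = ({3, 5, 6} : Finset (Fin 8)) then -1
  else 0

/-- `*₇φ` on `V ⊂ ℝ⁸`, regarded as a 4-form on `ℝ⁸` annihilated by `i(e₀)`. -/
def psi8 : Form K 8 := fun s =>
  if s = ({4, 5, 6, 7} : Finset (Fin 8)) then 1
  else if s = ({2, 3, 6, 7} : Finset (Fin 8)) then 1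
  else if s = ({2, 3, 4, 5} : Finset (Fin 8)) then 1
  else if s = ({1, 3, 5, 7} : Finset (Fin 8)) then 1
  else if s = ({1, 3, 4, 6} : Finset (Fin 8)) then -1
  else if s = ({1, 2, 5, 6} : Finset (Fin 8)) then -1
  else if s = ({1, 2, 4, 7} : Finset (Fin 8)) then -1
  else 0

/-- The standard Cayley 4-form `Φ = e⁰ ∧ φ + *₇φ` on `ℝ⁸`. -/
def Phi8 : Form K 8 := wedge (e1 0) phi8 + psi8

/-- The index set of `V = span{e₁, …, e₇} ⊂ ℝ⁸`. -/
def Vset : Finset (Fin 8) := {1, 2, 3, 4, 5, 6, 7}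

/-- The Hodge star `*₇` of `V ⊂ ℝ⁸` (volume form `e^{1⋯7}`), acting on forms on `ℝ⁸`
annihilated by `i(e₀)`. -/
def star7 (α : Form K 8) : Form K 8 :=
  fun t => if (0 : Fin 8) ∈ t then 0 else signMerge (Vset \ t) t * α (Vset \ t)

/-- `α` is (the pullback of) a form on `V`, i.e. `i(e₀) α = 0`. -/
def onV (α : Form K 8) : Prop := ∀ s, (0 : Fin 8) ∈ s → α s = 0

/-- `λ²(α) = ½ (e⁰ ∧ α + i(α♯) φ)` for `α ∈ V*`. -/
def lambda2 (α : Form K 8) : Form K 8 :=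
  (2 : K)⁻¹ • (wedge (e1 0) α + iprod (sharp1 α) phi8)

/-- `λ⁴(α) = (1/√8) (e⁰ ∧ i(α♯) *₇φ − α ∧ φ)` for `α ∈ V*`. -/
def lambda4 (α : Form K 8) : Form K 8 :=
  (algebraMap ℝ K (Real.sqrt 8))⁻¹ • (wedge (e1 0) (iprod (sharp1 α) psi8) - wedge α phi8)

/-- `λ⁶(α) = *₈ λ²(α)` for `α ∈ V*`. -/
def lambda6 (α : Form K 8) : Form K 8 := hstar (lambda2 α)

/-- The projection `π²₇(α) = (α + *₈(Φ ∧ α))/4` onto `Λ²₇`. -/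
def pi27 (α : Form K 8) : Form K 8 := (4 : K)⁻¹ • (α + hstar (wedge Phi8 α))

/-- The projection `π⁴₇(β) = Σ_{μ=1}^{7} ⟨β, λ⁴(e^μ)⟩ λ⁴(e^μ)` onto `Λ⁴₇`. -/
def pi47 (β : Form K 8) : Form K 8 :=
  ∑ μ : Fin 7, inner' β (lambda4 (e1 μ.succ)) • lambda4 (e1 μ.succ)

/-- `τ(u₀,u₁,u₂,u₃) = Σ_{μ=1}^{7} λ⁴(e^μ)(u₀,u₁,u₂,u₃) ⬝ λ⁴(e^μ) = π⁴₇(u₀♭∧u₁♭∧u₂♭∧u₃♭)`. -/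
def tau4 (u : Fin 4 → (Fin 8 → K)) : Form K 8 :=
  ∑ μ : Fin 7, evalForm (lambda4 (e1 μ.succ)) u • lambda4 (e1 μ.succ)

/-- Partial derivative `∂f^a/∂x^j` at `x`. -/
def pd {m p : ℕ} (f : (Fin m → ℝ) → (Fin p → ℝ)) (x : Fin m → ℝ) (j : Fin m) (a : Fin p) : ℝ :=
  fderiv ℝ f x (Pi.single j 1) a


/-! Graph setting for associative `T³`-fibrations: `ℝ⁷ = ℝ⁴ × ℝ³` with coordinates
`(y⁴,…,y⁷,x¹,x²,x³)`, where `dx¹,dx²,dx³,dy⁴,…,dy⁷` is the dual basis `e¹,…,e⁷`. -/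

/-- The index of the coordinate `x^j` (`j = 1,2,3` shifted to `0,1,2`) in `ℝ⁷`. -/
def xj (j : Fin 3) : Fin 7 := Fin.castAdd 4 j

/-- The index of the coordinate `y^a` (`a = 4,…,7` shifted to `0,…,3`) in `ℝ⁷`. -/
def ya (a : Fin 4) : Fin 7 := a.addNat 3

/-- The spanning tangent vectors `w_a = ∂_a + Σ_j (∂f^j/∂y^a) ∂_j` of the graph of `f`. -/
def wC (f : (Fin 4 → ℝ) → (Fin 3 → ℝ)) (y : Fin 4 → ℝ) (a : Fin 4) : Fin 7 → ℝ :=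
  Pi.single (ya a) 1 + ∑ j : Fin 3, pd f y a j • (Pi.single (xj j) 1 : Fin 7 → ℝ)

/-- The real 2-form `γ` with `F_∇^S = √-1 γ`, i.e. `γ = Σ_{j,a} (∂f^j/∂y^a) dy^a ∧ dx^j`. -/
def gammaC (f : (Fin 4 → ℝ) → (Fin 3 → ℝ)) (y : Fin 4 → ℝ) : Form ℝ 7 :=
  ∑ j : Fin 3, ∑ a : Fin 4, pd f y a j • wedge (e1 (ya a)) (e1 (xj j))

/-- The `√-1 ℝ`-valued curvature 2-form
`F_∇^S = √-1 Σ_{j,a} (∂f^j/∂y^a) dy^a ∧ dx^j` of the real Fourier–Mukai transform. -/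
def FSC (f : (Fin 4 → ℝ) → (Fin 3 → ℝ)) (y : Fin 4 → ℝ) : Form ℂ 7 :=
  fun s => Complex.I * (gammaC f y s : ℂ)

/-! Anti-self-duality on `ℝ⁴` with respect to an arbitrary metric `G` and
orientation `ε` times the standard one. -/

/-- The indicator 2-form `e^u` on `ℝ⁴`. -/
def indF (u : Finset (Fin 4)) : Form ℝ 4 := fun s => if s = u then 1 else 0

/-- The 2×2 minor `det (H_{s t})` of a matrix `H` with rows `s` and columns `t` (sorted). -/
def minor2 (H : Matrix (Fin 4) (Fin 4) ℝ) (s t : Finset (Fin 4)) : ℝ :=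
  if hs : s.card = 2 then
    if ht : t.card = 2 then
      Matrix.det (Matrix.of fun i j =>
        H (s.orderIsoOfFin hs i : Fin 4) (t.orderIsoOfFin ht j : Fin 4))
    else 0
  else 0

/-- The inner product on 2-forms on `ℝ⁴` induced by the metric whose *inverse* Gram
matrix is `H`:  `⟨e^s, e^t⟩ = det (H_{s t})`. -/
def innerG2 (H : Matrix (Fin 4) (Fin 4) ℝ) (α β : Form ℝ 4) : ℝ :=
  ∑ s, ∑ t, α s * β t * minor2 H s t

/-- The Hodge star on 2-forms on `ℝ⁴` for the metric with Gram matrix `G` (in the standard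
basis) and the orientation which is `ε` times the standard one:  it is determined by
`γ ∧ (starG G ε β) = ⟨γ, β⟩_G · ε · √(det G) · e^{0123}`. -/
def starG (G : Matrix (Fin 4) (Fin 4) ℝ) (ε : ℝ) (β : Form ℝ 4) : Form ℝ 4 :=
  fun t => (signMerge tᶜ t : ℝ) * ε * Real.sqrt G.det * innerG2 G⁻¹ (indF tᶜ) β

/-- The real 2-form `γ^B` with `F_∇^B = √-1 γ^B`, regarded as a 2-form on `ℝ⁷`:
`γ^B = Σ_{a,b} (∂A^b/∂y^a) dy^a ∧ dy^b`. -/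
def gammaBC (A : (Fin 4 → ℝ) → (Fin 4 → ℝ)) (y : Fin 4 → ℝ) : Form ℝ 7 :=
  ∑ a : Fin 4, ∑ b : Fin 4, pd A y a b • wedge (e1 (ya a)) (e1 (ya b))

/-- The `√-1 ℝ`-valued curvature `F_∇^B = √-1 Σ_{a,b} (∂A^b/∂y^a) dy^a ∧ dy^b`. -/
def FBC (A : (Fin 4 → ℝ) → (Fin 4 → ℝ)) (y : Fin 4 → ℝ) : Form ℂ 7 :=
  fun s => Complex.I * (gammaBC A y s : ℂ)

/-- The real 2-form `β = -√-1 F_∇^B` regarded as a 2-form on `ℝ⁴ ⊇ B`. -/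
def betaC (A : (Fin 4 → ℝ) → (Fin 4 → ℝ)) (y : Fin 4 → ℝ) : Form ℝ 4 :=
  ∑ a : Fin 4, ∑ b : Fin 4, pd A y a b • wedge (e1 a) (e1 b)

/-- The Gram matrix `g_{ab} = ⟨w_a, w_b⟩` of the metric induced on the graph of `f`. -/
def gramC (f : (Fin 4 → ℝ) → (Fin 3 → ℝ)) (y : Fin 4 → ℝ) : Matrix (Fin 4) (Fin 4) ℝ :=
  Matrix.of fun a b => ∑ k, wC f y a k * wC f y b k

/-- The sign `sign (*₇φ(w₄,…,w₇))` fixing the orientation making the graph coassociative. -/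
def epsC (f : (Fin 4 → ℝ) → (Fin 3 → ℝ)) (y : Fin 4 → ℝ) : ℝ :=
  Real.sign (evalForm psi7 (fun a => wC f y a))

/-!
Write `F = √-1 γ` and let `M` be the skew-symmetric matrix of the real 2-form `γ`. Identifying
6-forms on `ℝ⁷` with vectors, `γ³/6` is the vector of signed 6×6 sub-Pfaffians of `M` and `γ ∧ *₇φ`
is the contraction `φ(M)`, so the curvature equation says that these two vectors agree. The form
`φ ∧ *₇γ²` corresponds to `2 M φ(M)`, and the vector of sub-Pfaffians lies in the kernel of `M`;
hence the second equation in (3) follows from the first.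

For the 2-form of a graph, four components of the difference of the two vectors are, up to sign, the
values of `φ` on triples of the frame `w`. The other three are components of `T ⋆b`, where `b`
consists of the coordinates of `β`, the columns of `T` are the cross products `w_a × w_b`, and `⋆`
is the Euclidean Hodge star on 2-forms of `ℝ⁴`. If the graph is coassociative, `T ⋆b` is orthogonal
to the frame, so it vanishes as soon as those three components do.

Anti-self-duality enters through the identity `Tᵀ T = C + ψ(w) ⋆`, where `ψ = *₇φ` and `C` is the
induced metric on bivectors. Coassociativity bounds the rank of `T` by three, which together with
`(C ⋆)² = det g` forces `ψ(w)² = det g`. Therefore `ψ(w) = ε √(det g)`, and `β` is anti-self-dual if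
and only if `(C + ψ(w) ⋆) ⋆b = 0`, that is, `T ⋆b = 0`.
-/

section Planes

variable {R : Type*} [CommRing R]

/-- Oriented index pairs of the coordinate planes of a four-dimensional space. The order is chosen
so that `plane i` followed by `plane (i + 3)` is always an even permutation of `0, 1, 2, 3`; this
removes all signs from the Hodge star. -/
def plane : Fin 6 → Fin 4 × Fin 4 := ![(0, 1), (0, 2), (0, 3), (2, 3), (3, 1), (1, 2)]

/-- The second compound matrix of `A`: its 2×2 minors, indexed by `plane`. -/
def compound2 (A : Matrix (Fin 4) (Fin 4) R) : Matrix (Fin 6) (Fin 6) R :=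
  Matrix.of fun i j => A (plane i).1 (plane j).1 * A (plane i).2 (plane j).2
    - A (plane i).1 (plane j).2 * A (plane i).2 (plane j).1

/-- The matrix of the Hodge star on 2-forms of Euclidean four-space in the basis `plane`. -/
def planeStar : Matrix (Fin 6) (Fin 6) R :=
  (Equiv.addRight (3 : Fin 6)).permMatrix R

lemma compound2_one : compound2 (1 : Matrix (Fin 4) (Fin 4) R) = 1 := by
  ext i j
  simp only [compound2, Matrix.of_apply, Matrix.one_apply]
  fin_cases i <;> fin_cases j <;> simp [plane]

lemma compound2_mul (A B : Matrix (Fin 4) (Fin 4) R) :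
    compound2 (A * B) = compound2 A * compound2 B := by
  ext i j
  simp only [compound2, plane, Matrix.of_apply, Matrix.mul_apply, Fin.sum_univ_four,
    Fin.sum_univ_six, Matrix.cons_val]
  ring

lemma compound2_transpose (A : Matrix (Fin 4) (Fin 4) R) :
    compound2 A.transpose = (compound2 A).transpose := by
  ext i j
  simp only [compound2, Matrix.of_apply, Matrix.transpose_apply]
  ring

lemma planeStar_mul_self : (planeStar : Matrix (Fin 6) (Fin 6) R) * planeStar = 1 := by
  have involutive : Equiv.addRight (3 : Fin 6) * Equiv.addRight 3 = 1 := by decide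
  rw [planeStar, ← Matrix.permMatrix_mul, involutive, Matrix.permMatrix_one]

/-- The two index pairs `plane i` and `plane j` listed one after the other. -/
def planePair (i j : Fin 6) : Fin 4 → Fin 4 :=
  ![(plane i).1, (plane i).2, (plane j).1, (plane j).2]

lemma not_injective_planePair {i j : Fin 6} (h : j ≠ i + 3) :
    ¬ Function.Injective (planePair i j) := by
  revert i j
  decide

lemma exists_perm_eq_planePair (i : Fin 6) :
    ∃ σ : Equiv.Perm (Fin 4), Equiv.Perm.sign σ = 1 ∧ ⇑σ = planePair i (i + 3) := by
  revert i
  decide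

lemma planeStar_apply (i j : Fin 6) :
    (planeStar i j : R) = if j = i + 3 then 1 else 0 := by
  simp [planeStar, Equiv.Perm.permMatrix, PEquiv.toMatrix_apply, eq_comm]

lemma alternatingMap_comp_planePair {M : Type*} [AddCommGroup M] [Module R M]
    (f : M [⋀^Fin 4]→ₗ[R] R) (v : Fin 4 → M) (i j : Fin 6) :
    f (v ∘ planePair i j) = planeStar i j * f v := by
  rw [planeStar_apply]
  split_ifs with h
  · obtain ⟨σ, hσ, hσ'⟩ := exists_perm_eq_planePair i
    rw [h, ← hσ', f.map_perm, hσ, one_smul, one_mul]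
  · rw [zero_mul]
    exact f.map_eq_zero_of_not_injective _ fun hv => not_injective_planePair h hv.of_comp

lemma det_submatrix_planePair (A : Matrix (Fin 4) (Fin 4) R) (i j : Fin 6) :
    (A.submatrix (planePair i j) id).det = planeStar i j * A.det :=
  alternatingMap_comp_planePair Matrix.detRowAlternating A.row i j

lemma det_fin_four (M : Matrix (Fin 4) (Fin 4) R) :
    M.det =
      (M 0 0 * M 1 1 - M 0 1 * M 1 0) * (M 2 2 * M 3 3 - M 2 3 * M 3 2)
      - (M 0 0 * M 1 2 - M 0 2 * M 1 0) * (M 2 1 * M 3 3 - M 2 3 * M 3 1)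
      + (M 0 0 * M 1 3 - M 0 3 * M 1 0) * (M 2 1 * M 3 2 - M 2 2 * M 3 1)
      + (M 0 1 * M 1 2 - M 0 2 * M 1 1) * (M 2 0 * M 3 3 - M 2 3 * M 3 0)
      - (M 0 1 * M 1 3 - M 0 3 * M 1 1) * (M 2 0 * M 3 2 - M 2 2 * M 3 0)
      + (M 0 2 * M 1 3 - M 0 3 * M 1 2) * (M 2 0 * M 3 1 - M 2 1 * M 3 0) := by
  simp [Matrix.det_succ_row_zero, Fin.sum_univ_succ, Fin.succAbove]
  ring

lemma compound2_mul_planeStar_mul_transpose (A : Matrix (Fin 4) (Fin 4) R) :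
    compound2 A * planeStar * (compound2 A).transpose = A.det • planeStar := by
  ext i j
  rw [Matrix.smul_apply, smul_eq_mul, mul_comm, ← det_submatrix_planePair, det_fin_four]
  simp [Matrix.mul_apply, Fin.sum_univ_six, planeStar_apply, compound2, plane, planePair]
  ring

lemma compound2_mul_planeStar_sq {A : Matrix (Fin 4) (Fin 4) R} (hA : A.IsSymm) :
    compound2 A * planeStar * (compound2 A * planeStar) = A.det • 1 := by
  calc compound2 A * planeStar * (compound2 A * planeStar)
      = compound2 A * planeStar * (compound2 A).transpose * planeStar := by
        rw [← compound2_transpose, hA.eq, ← mul_assoc]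
    _ = A.det • 1 := by
        rw [compound2_mul_planeStar_mul_transpose, Matrix.smul_mul, planeStar_mul_self]

end Planes

section Evaluation

variable {𝕜 : Type*} [NormedField 𝕜] {m k : ℕ}

/-- `evalForm α` as an alternating map. -/
def evalFormAlternating (k : ℕ) (α : Form 𝕜 n) : (Fin n → 𝕜) [⋀^Fin k]→ₗ[𝕜] 𝕜 :=
  ∑ s : Finset (Fin n), α s • if h : s.card = k then
    Matrix.detRowAlternating.compLinearMap
      (LinearMap.funLeft 𝕜 𝕜 fun j => (s.orderIsoOfFin h j : Fin n)) else 0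

lemma evalFormAlternating_apply (α : Form 𝕜 n) (v : Fin k → Fin n → 𝕜) :
    evalFormAlternating k α v = evalForm α v := by
  let evalAt : ((Fin n → 𝕜) [⋀^Fin k]→ₗ[𝕜] 𝕜) →+ 𝕜 :=
    { toFun := fun f => f v, map_zero' := rfl, map_add' := fun _ _ => rfl }
  refine (map_sum evalAt _ _).trans (Finset.sum_congr rfl fun s _ => ?_)
  refine congrArg (α s * ·) ?_
  split_ifs <;> rfl

lemma alternatingMap_comp_eq_zero_of_strictMono {M : Type*} [AddCommGroup M] [Module 𝕜 M]
    {f : M [⋀^Fin k]→ₗ[𝕜] 𝕜} {v : Fin m → M}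
    (h : ∀ g : Fin k → Fin m, StrictMono g → f (v ∘ g) = 0) (g : Fin k → Fin m) :
    f (v ∘ g) = 0 := by
  by_cases hg : Function.Injective g
  · have hmono : StrictMono (g ∘ Tuple.sort g) :=
      (Tuple.monotone_sort g).strictMono_of_injective (hg.comp (Tuple.sort g).injective)
    have hsort := h _ hmono
    rwa [← Function.comp_assoc, f.map_perm, smul_eq_zero_iff_eq] at hsort
  · exact f.map_eq_zero_of_not_injective _ fun hv => hg hv.of_comp

lemma coe_orderIsoOfFin_eq {s : Finset (Fin n)} {c : Fin k → Fin n} (hc : StrictMono c)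
    (hs : Finset.univ.image c = s) (h : s.card = k) (j : Fin k) :
    (s.orderIsoOfFin h j : Fin n) = c j := by
  rw [Finset.coe_orderIsoOfFin_apply]
  refine (congrFun (Finset.orderEmbOfFin_unique h (fun x => ?_) hc) j).symm
  exact hs ▸ Finset.mem_image_of_mem c (Finset.mem_univ x)

lemma dite_det_orderIsoOfFin {s : Finset (Fin n)} {c : Fin k → Fin n} (hc : StrictMono c)
    (hs : Finset.univ.image c = s) (v : Fin k → Fin n → 𝕜) :
    (if h : s.card = k then
      Matrix.det (Matrix.of fun i j => v i ((s.orderIsoOfFin h j : Fin n))) else 0) =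
      ((Matrix.of v).submatrix id c).det := by
  have hcard : s.card = k := by
    rw [← hs, Finset.card_image_of_injective _ hc.injective, Finset.card_fin]
  simp only [dif_pos hcard, coe_orderIsoOfFin_eq hc hs]
  rfl

lemma sum_phi7_mul (F : Finset (Fin 7) → 𝕜) :
    ∑ s, phi7 s * F s = F {0, 1, 2} + F {0, 3, 4} + F {0, 5, 6} + F {1, 3, 5} - F {1, 4, 6}
      - F {2, 3, 6} - F {2, 4, 5} := by
  rw [← Finset.sum_subset (Finset.subset_univ ({{0, 1, 2}, {0, 3, 4}, {0, 5, 6}, {1, 3, 5},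
    {1, 4, 6}, {2, 3, 6}, {2, 4, 5}} : Finset (Finset (Fin 7))))]
  · repeat rw [Finset.sum_insert (by decide)]
    simp (decide := true) only [phi7, Finset.sum_singleton, if_true, if_false]
    ring
  · intro s _ hs
    simp only [Finset.mem_insert, Finset.mem_singleton, not_or] at hs
    simp only [phi7, hs, if_false, zero_mul]

lemma sum_psi7_mul (F : Finset (Fin 7) → 𝕜) :
    ∑ s, psi7 s * F s = F {3, 4, 5, 6} + F {1, 2, 5, 6} + F {1, 2, 3, 4} + F {0, 2, 4, 6}
      - F {0, 2, 3, 5} - F {0, 1, 4, 5} - F {0, 1, 3, 6} := by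
  rw [← Finset.sum_subset (Finset.subset_univ ({{3, 4, 5, 6}, {1, 2, 5, 6}, {1, 2, 3, 4},
    {0, 2, 4, 6}, {0, 2, 3, 5}, {0, 1, 4, 5}, {0, 1, 3, 6}} : Finset (Finset (Fin 7))))]
  · repeat rw [Finset.sum_insert (by decide)]
    simp (decide := true) only [psi7, Finset.sum_singleton, if_true, if_false]
    ring
  · intro s _ hs
    simp only [Finset.mem_insert, Finset.mem_singleton, not_or] at hs
    simp only [psi7, hs, if_false, zero_mul]

lemma evalForm_phi7 (v : Fin 3 → Fin 7 → 𝕜) :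
    evalForm phi7 v = ((Matrix.of v).submatrix id ![0, 1, 2]).det
      + ((Matrix.of v).submatrix id ![0, 3, 4]).det + ((Matrix.of v).submatrix id ![0, 5, 6]).det
      + ((Matrix.of v).submatrix id ![1, 3, 5]).det - ((Matrix.of v).submatrix id ![1, 4, 6]).det
      - ((Matrix.of v).submatrix id ![2, 3, 6]).det
      - ((Matrix.of v).submatrix id ![2, 4, 5]).det := by
  rw [evalForm, sum_phi7_mul]
  congr <;> exact dite_det_orderIsoOfFin (by decide) (by decide) v

lemma evalForm_psi7 (v : Fin 4 → Fin 7 → 𝕜) :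
    evalForm psi7 v = ((Matrix.of v).submatrix id ![3, 4, 5, 6]).det
      + ((Matrix.of v).submatrix id ![1, 2, 5, 6]).det
      + ((Matrix.of v).submatrix id ![1, 2, 3, 4]).det
      + ((Matrix.of v).submatrix id ![0, 2, 4, 6]).det
      - ((Matrix.of v).submatrix id ![0, 2, 3, 5]).det
      - ((Matrix.of v).submatrix id ![0, 1, 4, 5]).det
      - ((Matrix.of v).submatrix id ![0, 1, 3, 6]).det := by
  rw [evalForm, sum_psi7_mul]
  congr <;> exact dite_det_orderIsoOfFin (by decide) (by decide) v

end Evaluation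

section Contraction

variable {R : Type*} [CommRing R]

/-- The contraction `φ(A)` of the 2-form with skew-symmetric matrix `A` into the `G₂` 3-form:
`phiContr A p = ∑_{i<j} φ_{pij} A_{ij}`. -/
def phiContr (A : Matrix (Fin 7) (Fin 7) R) : Fin 7 → R :=
  ![A 1 2 + A 3 4 + A 5 6, A 2 0 + A 3 5 + A 6 4, A 0 1 + A 5 4 + A 6 3, A 4 0 + A 5 1 + A 2 6,
    A 0 3 + A 1 6 + A 2 5, A 6 0 + A 1 3 + A 4 2, A 0 5 + A 4 1 + A 3 2]

/-- The cross product of `ℝ⁷` determined by the `G₂` 3-form via `⟨u, v × w⟩ = φ(u, v, w)`. -/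
def cross7 (v w : Fin 7 → R) : Fin 7 → R :=
  phiContr (Matrix.vecMulVec v w - Matrix.vecMulVec w v)

lemma phiContr_smul (c : R) (A : Matrix (Fin 7) (Fin 7) R) :
    phiContr (c • A) = c • phiContr A := by
  simp [phiContr, mul_add]

lemma phiContr_map {S : Type*} [CommRing S] (g : R →+* S) (A : Matrix (Fin 7) (Fin 7) R) :
    phiContr (A.map g) = g ∘ phiContr A := by
  ext p
  fin_cases p <;> simp [phiContr]

end Contraction

section Cross

variable {𝕜 : Type*} [NormedField 𝕜]

lemma dotProduct_cross7 (u v w : Fin 7 → 𝕜) : u ⬝ᵥ cross7 v w = evalForm phi7 ![u, v, w] := by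
  simp [evalForm_phi7, Matrix.det_fin_three, dotProduct, Fin.sum_univ_seven, cross7, phiContr,
    Matrix.vecMulVec_apply]
  ring

lemma cross7_dotProduct_cross7 (u v w z : Fin 7 → 𝕜) :
    cross7 u v ⬝ᵥ cross7 w z =
      (u ⬝ᵥ w) * (v ⬝ᵥ z) - (u ⬝ᵥ z) * (v ⬝ᵥ w) + evalForm psi7 ![u, v, w, z] := by
  simp [evalForm_psi7, det_fin_four, dotProduct, Fin.sum_univ_seven, cross7, phiContr,
    Matrix.vecMulVec_apply]
  ring

end Cross

section Coassociative

variable {𝕜 : Type*} [NormedField 𝕜] {w : Fin 4 → Fin 7 → 𝕜}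

/-- The matrix whose columns are the cross products `w a × w b`, for `(a, b)` running through the
oriented index pairs `plane`. -/
def planeCross (w : Fin 4 → Fin 7 → 𝕜) : Matrix (Fin 7) (Fin 6) 𝕜 :=
  Matrix.of fun p i => cross7 (w (plane i).1) (w (plane i).2) p

/-- The Gram matrix of `w` for the standard bilinear form. -/
def gram7 (w : Fin 4 → Fin 7 → 𝕜) : Matrix (Fin 4) (Fin 4) 𝕜 :=
  Matrix.of w * (Matrix.of w).transpose

/-- The `G₂` 3-form vanishes on the span of `w`: the four vectors span, when independent, a
coassociative subspace. -/
def IsCoassociative (w : Fin 4 → Fin 7 → 𝕜) : Prop :=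
  ∀ a b c : Fin 4, a < b → b < c → evalForm phi7 ![w a, w b, w c] = 0

lemma planeCross_transpose_mul_self (w : Fin 4 → Fin 7 → 𝕜) :
    (planeCross w).transpose * planeCross w =
      compound2 (gram7 w) + evalForm psi7 w • planeStar := by
  ext i j
  have hψ : evalForm psi7 (w ∘ planePair i j) = planeStar i j * evalForm psi7 w := by
    simpa only [evalFormAlternating_apply] using
      alternatingMap_comp_planePair (evalFormAlternating 4 psi7) w i j
  have hpair : w ∘ planePair i j =
      ![w (plane i).1, w (plane i).2, w (plane j).1, w (plane j).2] := by
    ext a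
    fin_cases a <;> rfl
  rw [Matrix.add_apply, Matrix.smul_apply, smul_eq_mul, mul_comm (evalForm psi7 w), ← hψ, hpair]
  exact cross7_dotProduct_cross7 _ _ _ _

lemma IsCoassociative.evalForm_eq_zero (h : IsCoassociative w) (a b c : Fin 4) :
    evalForm phi7 ![w a, w b, w c] = 0 := by
  have hcomp (g : Fin 3 → Fin 4) : w ∘ g = ![w (g 0), w (g 1), w (g 2)] := by
    ext i
    fin_cases i <;> rfl
  have hvals : ![w a, w b, w c] = w ∘ ![a, b, c] :=
    (hcomp ![a, b, c]).symm
  rw [hvals, ← evalFormAlternating_apply]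
  refine alternatingMap_comp_eq_zero_of_strictMono (fun g hg => ?_) _
  rw [hcomp, evalFormAlternating_apply]
  exact h _ _ _ (hg (by decide)) (hg (by decide))

lemma IsCoassociative.mul_planeCross (h : IsCoassociative w) :
    Matrix.of w * planeCross w = 0 := by
  ext a i
  exact (dotProduct_cross7 _ _ _).trans (h.evalForm_eq_zero _ _ _)

lemma gram7_isSymm (w : Fin 4 → Fin 7 → 𝕜) : (gram7 w).IsSymm := by
  rw [Matrix.IsSymm, gram7, Matrix.transpose_mul, Matrix.transpose_transpose]

lemma IsCoassociative.rank_planeCross_le (h : IsCoassociative w) (hw : LinearIndependent 𝕜 w) :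
    (planeCross w).rank ≤ 3 := by
  have hrank : (Matrix.of w).rank = 4 := LinearIndependent.rank_matrix hw
  have hsum := Matrix.rank_add_rank_le_card_of_mul_eq_zero h.mul_planeCross
  rw [hrank, Fintype.card_fin] at hsum
  omega

/- `X = compound2 G * planeStar` satisfies `X² = det G`, while `X + ψ(w)` has rank at most three,
so the product `(X - ψ(w)) (X + ψ(w)) = det G - ψ(w)²` cannot be invertible. -/
lemma IsCoassociative.evalForm_psi7_sq (h : IsCoassociative w) (hw : LinearIndependent 𝕜 w) :
    evalForm psi7 w ^ 2 = (gram7 w).det := by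
  set D := evalForm psi7 w
  set X := compound2 (gram7 w) * planeStar
  have hX : X + D • 1 = (planeCross w).transpose * planeCross w * planeStar := by
    rw [planeCross_transpose_mul_self, Matrix.add_mul, Matrix.smul_mul, planeStar_mul_self]
  have hprod : (X - D • 1) * (X + D • 1) = ((gram7 w).det - D ^ 2) • 1 := by
    rw [sub_smul, ← compound2_mul_planeStar_sq (gram7_isSymm w)]
    simp only [Matrix.sub_mul, Matrix.mul_add, Matrix.mul_smul, Matrix.smul_mul, Matrix.one_mul,
      Matrix.mul_one, X, sq D, mul_smul]
    module
  have hrank : (((gram7 w).det - D ^ 2) • (1 : Matrix (Fin 6) (Fin 6) 𝕜)).rank ≤ 3 := by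
    rw [← hprod, hX]
    exact (Matrix.rank_mul_le_right _ _).trans <| (Matrix.rank_mul_le_left _ _).trans <|
      (Matrix.rank_mul_le_right _ _).trans (h.rank_planeCross_le hw)
  by_contra hne
  have hunit : IsUnit (((gram7 w).det - D ^ 2) • (1 : Matrix (Fin 6) (Fin 6) 𝕜)) :=
    isUnit_one.smul (Units.mk0 _ (sub_ne_zero.mpr (Ne.symm hne)))
  rw [Matrix.rank_of_isUnit _ hunit, Fintype.card_fin] at hrank
  omega

end Coassociative

section AntiSelfDual

variable {w : Fin 4 → Fin 7 → ℝ}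

lemma det_gram7_pos (hw : LinearIndependent ℝ w) : 0 < (gram7 w).det := by
  have hpos := (Matrix.PosDef.one (n := Fin 7) (R := ℝ)).mul_mul_conjTranspose_same
    (B := Matrix.of w) (Matrix.vecMul_injective_iff.mpr hw)
  rw [Matrix.mul_one] at hpos
  exact hpos.det_pos

lemma IsCoassociative.sign_mul_sqrt_det (h : IsCoassociative w) (hw : LinearIndependent ℝ w) :
    Real.sign (evalForm psi7 w) * √(gram7 w).det = evalForm psi7 w := by
  rw [← h.evalForm_psi7_sq hw, Real.sqrt_sq_eq_abs]
  rcases lt_trichotomy (evalForm psi7 w) 0 with hneg | hzero | hpos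
  · rw [Real.sign_of_neg hneg, abs_of_neg hneg, neg_one_mul, neg_neg]
  · rw [hzero, abs_zero, mul_zero]
  · rw [Real.sign_of_pos hpos, abs_of_pos hpos, one_mul]

/- With `D = ψ(w)` the left-hand side says `(C + D⋆)(⋆b) = 0` for the compound matrix `C` of the
metric, and `C + D⋆ = Tᵀ T` for `T = planeCross w`. -/
lemma IsCoassociative.antiSelfDual_iff (h : IsCoassociative w) (hw : LinearIndependent ℝ w)
    (b : Fin 6 → ℝ) :
    (Real.sign (evalForm psi7 w) * √(gram7 w).det) •
        planeStar.mulVec ((compound2 (gram7 w)⁻¹).mulVec b) = -b ↔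
      (planeCross w).mulVec (planeStar.mulVec b) = 0 := by
  rw [h.sign_mul_sqrt_det hw]
  have hunit := (det_gram7_pos hw).ne'.isUnit
  have hinv : compound2 (gram7 w) * compound2 (gram7 w)⁻¹ = 1 := by
    rw [← compound2_mul, Matrix.mul_nonsing_inv _ hunit, compound2_one]
  have hCJ : compound2 (gram7 w) * planeStar * (planeStar * compound2 (gram7 w)⁻¹) = 1 := by
    rw [Matrix.mul_assoc, ← Matrix.mul_assoc planeStar, planeStar_mul_self, Matrix.one_mul, hinv]
  have hinj := Matrix.mulVec_injective_of_isUnit (IsUnit.of_mul_eq_one _ hCJ)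
  have hT := Matrix.conjTranspose_mul_self_mulVec_eq_zero (planeCross w) (planeStar.mulVec b)
  rw [Matrix.conjTranspose_eq_transpose_of_trivial, planeCross_transpose_mul_self,
    Matrix.add_mulVec, Matrix.smul_mulVec, Matrix.mulVec_mulVec b planeStar planeStar,
    planeStar_mul_self, Matrix.one_mulVec] at hT
  rw [← hT, ← hinj.eq_iff, Matrix.mulVec_smul, Matrix.mulVec_mulVec b planeStar,
    Matrix.mulVec_mulVec, hCJ, Matrix.one_mulVec, Matrix.mulVec_neg, ← Matrix.mulVec_mulVec,
    eq_neg_iff_add_eq_zero, add_comm]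

end AntiSelfDual

section Signs

variable {𝕜 : Type*} [NormedField 𝕜]

lemma signMerge_eq_ite (s t : Finset (Fin n)) :
    (signMerge s t : 𝕜) =
      if Even (((s ×ˢ t).filter fun p => p.2 < p.1).card) then 1 else -1 :=
  neg_one_pow_eq_ite

lemma signMerge_mul_self (s t : Finset (Fin n)) :
    (signMerge s t : 𝕜) * signMerge s t = 1 := by
  rw [signMerge, ← mul_pow, neg_one_mul, neg_neg, one_pow]

lemma signMerge_union_left {s s' : Finset (Fin n)} (h : Disjoint s s') (t : Finset (Fin n)) :
    (signMerge (s ∪ s') t : 𝕜) = signMerge s t * signMerge s' t := by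
  rw [signMerge, Finset.union_product, Finset.filter_union, Finset.card_union_of_disjoint, pow_add,
    signMerge, signMerge]
  exact Finset.disjoint_filter_filter (Finset.disjoint_product.mpr (Or.inl h))

lemma signMerge_union_right (s : Finset (Fin n)) {t t' : Finset (Fin n)} (h : Disjoint t t') :
    (signMerge s (t ∪ t') : 𝕜) = signMerge s t * signMerge s t' := by
  rw [signMerge, Finset.product_union, Finset.filter_union, Finset.card_union_of_disjoint, pow_add,
    signMerge, signMerge]
  exact Finset.disjoint_filter_filter (Finset.disjoint_product.mpr (Or.inr h))

lemma signMerge_singleton (p i : Fin n) :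
    (signMerge {p} {i} : 𝕜) = if i < p then -1 else 1 := by
  rw [signMerge, Finset.singleton_product_singleton, Finset.filter_singleton]
  split_ifs <;> simp

lemma signMerge_singleton_insert (p : Fin n) {i : Fin n} {s : Finset (Fin n)} (hi : i ∉ s) :
    (signMerge {p} (insert i s) : 𝕜) = (if i < p then -1 else 1) * signMerge {p} s := by
  rw [Finset.insert_eq, signMerge_union_right _ (Finset.disjoint_singleton_left.mpr hi),
    signMerge_singleton]

lemma signMerge_singleton_triple (p : Fin n) {i j k : Fin n} (hij : i < j) (hjk : j < k) :
    (signMerge {p} {i, j, k} : 𝕜) =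
      (if i < p then -1 else 1) * ((if j < p then -1 else 1) * if k < p then -1 else 1) := by
  rw [signMerge_singleton_insert, signMerge_singleton_insert, signMerge_singleton]
  · simpa using hjk.ne
  · simpa using ⟨hij.ne, (hij.trans hjk).ne⟩

lemma signMerge_singleton_compl (p : Fin n) :
    (signMerge {p} {p}ᶜ : 𝕜) = (-1) ^ (p : ℕ) := by
  have hbelow : (({p} ×ˢ {p}ᶜ : Finset (Fin n × Fin n)).filter fun q => q.2 < q.1) =
      (Finset.Iio p).map ⟨fun q => (p, q), Prod.mk_right_injective p⟩ := by
    ext ⟨a, b⟩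
    simp only [Finset.singleton_product, Finset.mem_filter, Finset.mem_map, Finset.mem_compl,
      Finset.mem_singleton, Function.Embedding.coeFn_mk, Prod.mk.injEq, exists_eq_right_right,
      Finset.mem_Iio]
    grind
  rw [signMerge, hbelow, Finset.card_map, Fin.card_Iio]

lemma signMerge_map {m : ℕ} (e : Fin m ↪o Fin n) (s t : Finset (Fin m)) :
    (signMerge (s.map e.toEmbedding) (t.map e.toEmbedding) : 𝕜) = signMerge s t := by
  have hmap : s.map e.toEmbedding ×ˢ t.map e.toEmbedding =
      (s ×ˢ t).map (e.toEmbedding.prodMap e.toEmbedding) := by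
    ext ⟨a, b⟩
    simp only [Finset.mem_product, Finset.mem_map, RelEmbedding.coe_toEmbedding,
      Function.Embedding.coe_prodMap, Prod.exists, Prod.map_apply, Prod.mk.injEq]
    grind
  rw [signMerge, hmap, Finset.filter_map, Finset.card_map, signMerge]
  congr 3
  ext q
  simp

end Signs

section Grade

variable {𝕜 : Type*} [NormedField 𝕜] {k l : ℕ} {α β : Form 𝕜 n}

protected lemma isGrade.add (hα : isGrade k α) (hβ : isGrade k β) : isGrade k (α + β) :=
    fun s hs => by
  rw [Pi.add_apply, hα s hs, hβ s hs, add_zero]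

protected lemma isGrade.smul (c : 𝕜) (hα : isGrade k α) : isGrade k (c • α) := fun s hs => by
  rw [Pi.smul_apply, hα s hs, smul_zero]

protected lemma isGrade.sum {ι : Type*} {t : Finset ι} {α : ι → Form 𝕜 n}
    (h : ∀ i ∈ t, isGrade k (α i)) : isGrade k (∑ i ∈ t, α i) := fun s hs => by
  rw [Finset.sum_apply]
  exact Finset.sum_eq_zero fun i hi => h i hi s hs

lemma isGrade.wedge_apply (hα : isGrade k α) (β : Form 𝕜 n) (u : Finset (Fin n)) :
    wedge α β u = ∑ s ∈ u.powersetCard k, signMerge s (u \ s) * α s * β (u \ s) := by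
  refine (Finset.sum_subset (fun s hs => ?_) fun s hs hs' => ?_).symm
  · exact Finset.mem_powerset.mpr (Finset.mem_powersetCard.mp hs).1
  · have hcard : s.card ≠ k := fun hc =>
      hs' (Finset.mem_powersetCard.mpr ⟨Finset.mem_powerset.mp hs, hc⟩)
    rw [hα s hcard, mul_zero, zero_mul]

protected lemma isGrade.wedge (hα : isGrade k α) (hβ : isGrade l β) :
    isGrade (k + l) (wedge α β) := by
  intro u hu
  rw [hα.wedge_apply]
  refine Finset.sum_eq_zero fun s hs => ?_
  obtain ⟨hsu, hs⟩ := Finset.mem_powersetCard.mp hs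
  have hle := Finset.card_le_card hsu
  rw [hβ (u \ s) (by rw [Finset.card_sdiff_of_subset hsu]; omega), mul_zero]

protected lemma isGrade.hstar (hα : isGrade k α) (hkl : k + l = n) : isGrade l (hstar α) := by
  intro t ht
  have hcard := t.card_compl_add_card
  rw [Fintype.card_fin] at hcard
  rw [hstar, hα tᶜ (by omega), mul_zero]

lemma isGrade_e1 (i : Fin n) : isGrade 1 (e1 i : Form 𝕜 n) := fun s hs =>
  if_neg fun h : s = {i} => hs (by rw [h, Finset.card_singleton])

lemma isGrade_phi7 : isGrade 3 (phi7 : Form 𝕜 7) := by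
  intro s hs
  unfold phi7
  split_ifs <;> subst_vars <;> first | rfl | exact absurd (by decide) hs

end Grade

section Hodge

variable {𝕜 : Type*} [NormedField 𝕜]

lemma hstar_phi7 : hstar (phi7 : Form 𝕜 7) = psi7 := by
  ext s
  simp only [hstar, phi7, psi7, compl_eq_comm (x := s), eq_comm (b := s)]
  simp only [show ({0, 1, 2} : Finset (Fin 7))ᶜ = {3, 4, 5, 6} by decide,
    show ({0, 3, 4} : Finset (Fin 7))ᶜ = {1, 2, 5, 6} by decide,
    show ({0, 5, 6} : Finset (Fin 7))ᶜ = {1, 2, 3, 4} by decide,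
    show ({1, 3, 5} : Finset (Fin 7))ᶜ = {0, 2, 4, 6} by decide,
    show ({1, 4, 6} : Finset (Fin 7))ᶜ = {0, 2, 3, 5} by decide,
    show ({2, 3, 6} : Finset (Fin 7))ᶜ = {0, 1, 4, 5} by decide,
    show ({2, 4, 5} : Finset (Fin 7))ᶜ = {0, 1, 3, 6} by decide]
  split_ifs <;> subst_vars <;>
    simp (decide := true) only [signMerge_eq_ite, mul_zero, if_true, one_mul]

lemma wedge_hstar_compl_singleton (α β : Form 𝕜 n) (p : Fin n) :
    wedge α (hstar β) {p}ᶜ =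
      (-1) ^ (p : ℕ) * ∑ s with p ∉ s, signMerge {p} s * α s * β (insert p s) := by
  have hpowerset : ({p}ᶜ : Finset (Fin n)).powerset = Finset.univ.filter (p ∉ ·) := by
    ext s
    simp
  rw [wedge, Finset.mul_sum, hpowerset]
  refine Finset.sum_congr rfl fun s hs => ?_
  have hps : p ∉ s := (Finset.mem_filter.mp hs).2
  have hsp : s ⊆ {p}ᶜ := by simpa [Finset.subset_compl_iff_disjoint_right] using hps
  have hdisj : Disjoint {p} s := Finset.disjoint_singleton_left.mpr hps
  have hcompl : ({p}ᶜ \ s)ᶜ = {p} ∪ s := by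
    rw [Finset.sdiff_eq_inter_compl, Finset.compl_inter, compl_compl, compl_compl]
  have hsplit : (signMerge {p} {p}ᶜ : 𝕜) = signMerge {p} s * signMerge {p} ({p}ᶜ \ s) := by
    rw [← signMerge_union_right _ Finset.disjoint_sdiff, Finset.union_sdiff_of_subset hsp]
  rw [signMerge_singleton_compl] at hsplit
  rw [hstar, hcompl, signMerge_union_left hdisj, ← Finset.insert_eq, hsplit]
  linear_combination ((signMerge {p} ({p}ᶜ \ s) : 𝕜) * α s * β (insert p s)) *
    (signMerge_mul_self (𝕜 := 𝕜) s ({p}ᶜ \ s) - signMerge_mul_self (𝕜 := 𝕜) {p} s)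

end Hodge

section Pullback

variable {𝕜 : Type*} [NormedField 𝕜] {m : ℕ}

/-- The pullback of a form under the inclusion of the coordinate subspace listed by `e`. -/
def pullback (e : Fin m ↪o Fin n) (α : Form 𝕜 n) : Form 𝕜 m :=
  fun s => α (s.map e.toEmbedding)

protected lemma isGrade.pullback {k : ℕ} {α : Form 𝕜 n} (hα : isGrade k α) (e : Fin m ↪o Fin n) :
    isGrade k (pullback e α) := fun s hs =>
  hα _ (by rwa [Finset.card_map])

lemma pullback_wedge (e : Fin m ↪o Fin n) (α β : Form 𝕜 n) :
    pullback e (wedge α β) = wedge (pullback e α) (pullback e β) := by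
  ext u
  refine (Finset.sum_bij (fun s _ => s.map e.toEmbedding) (fun s hs => ?_)
    (fun s _ t _ h => Finset.map_injective _ h) (fun s hs => ?_) fun s hs => ?_).symm
  · simpa using hs
  · obtain ⟨t, ht, rfl⟩ := Finset.subset_map_iff.mp (Finset.mem_powerset.mp hs)
    exact ⟨t, Finset.mem_powerset.mpr ht, rfl⟩
  · rw [← Finset.map_sdiff, signMerge_map, pullback, pullback]

lemma mat2_pullback (e : Fin m ↪o Fin n) (γ : Form 𝕜 n) :
    mat2 (pullback e γ) = (mat2 γ).submatrix e e := by
  ext i j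
  simp [mat2, pullback, Finset.map_insert]

end Pullback

section Pfaffian

variable {R : Type*} [CommRing R]

/-- The Pfaffian of a skew-symmetric 4×4 matrix. -/
def pfaffian4 (A : Matrix (Fin 4) (Fin 4) R) : R :=
  A 0 1 * A 2 3 - A 0 2 * A 1 3 + A 0 3 * A 1 2

/-- The Pfaffian of a skew-symmetric 6×6 matrix, by expansion along the first row. -/
def pfaffian6 (A : Matrix (Fin 6) (Fin 6) R) : R :=
  ∑ j : Fin 5, (-1) ^ (j : ℕ) * A 0 j.succ *
    pfaffian4 (A.submatrix (Fin.succ ∘ j.succAbove) (Fin.succ ∘ j.succAbove))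

/-- The vector of signed sub-Pfaffians of a skew-symmetric 7×7 matrix: up to a factor, the vector
dual to the cube of the corresponding 2-form. -/
def pfaffianVec (A : Matrix (Fin 7) (Fin 7) R) : Fin 7 → R := fun p =>
  (-1) ^ (p : ℕ) * pfaffian6 (A.submatrix p.succAbove p.succAbove)

lemma pfaffian6_eq (A : Matrix (Fin 6) (Fin 6) R) :
    pfaffian6 A = A 0 1 * (A 2 3 * A 4 5 - A 2 4 * A 3 5 + A 2 5 * A 3 4)
      - A 0 2 * (A 1 3 * A 4 5 - A 1 4 * A 3 5 + A 1 5 * A 3 4)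
      + A 0 3 * (A 1 2 * A 4 5 - A 1 4 * A 2 5 + A 1 5 * A 2 4)
      - A 0 4 * (A 1 2 * A 3 5 - A 1 3 * A 2 5 + A 1 5 * A 2 3)
      + A 0 5 * (A 1 2 * A 3 4 - A 1 3 * A 2 4 + A 1 4 * A 2 3) := by
  simp [pfaffian6, Fin.sum_univ_five, pfaffian4, Fin.succAbove]
  ring

lemma mulVec_pfaffianVec {A : Matrix (Fin 7) (Fin 7) R} (hskew : ∀ i j, i < j → A j i = -A i j)
    (hdiag : ∀ i, A i i = 0) : A.mulVec (pfaffianVec A) = 0 := by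
  ext i
  simp only [Matrix.mulVec, dotProduct, Fin.sum_univ_seven, pfaffianVec, pfaffian6_eq,
    Matrix.submatrix_apply]
  fin_cases i <;> simp [Fin.succAbove, hskew, hdiag] <;> ring

lemma pfaffianVec_smul (c : R) (A : Matrix (Fin 7) (Fin 7) R) :
    pfaffianVec (c • A) = c ^ 3 • pfaffianVec A := by
  ext p
  simp only [pfaffianVec, pfaffian6_eq, Matrix.submatrix_apply, Matrix.smul_apply, Pi.smul_apply,
    smul_eq_mul]
  ring

lemma pfaffianVec_map {S : Type*} [CommRing S] (g : R →+* S) (A : Matrix (Fin 7) (Fin 7) R) :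
    pfaffianVec (A.map g) = g ∘ pfaffianVec A := by
  ext p
  simp [pfaffianVec, pfaffian6_eq]

end Pfaffian

section TwoForms

variable {𝕜 : Type*} [NormedField 𝕜]

lemma mat2_of_lt (γ : Form 𝕜 n) {i j : Fin n} (h : i < j) : mat2 γ i j = γ {i, j} := by
  simp [mat2, h]

lemma mat2_of_gt (γ : Form 𝕜 n) {i j : Fin n} (h : i < j) : mat2 γ j i = -mat2 γ i j := by
  simp [mat2, h, h.not_gt, Finset.pair_comm]

lemma mat2_self (γ : Form 𝕜 n) (i : Fin n) : mat2 γ i i = 0 := by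
  simp [mat2]

lemma mat2_add (α β : Form 𝕜 n) : mat2 (α + β) = mat2 α + mat2 β := by
  ext i j
  simp only [mat2, Matrix.of_apply, Matrix.add_apply, Pi.add_apply]
  split_ifs <;> ring

lemma mat2_smul (c : 𝕜) (α : Form 𝕜 n) : mat2 (c • α) = c • mat2 α := by
  ext i j
  simp only [mat2, Matrix.of_apply, Matrix.smul_apply, Pi.smul_apply, smul_eq_mul]
  split_ifs <;> ring

lemma isGrade.mat2_wedge {α β : Form 𝕜 n} (hα : isGrade 1 α) (i j : Fin n) :
    mat2 (wedge α β) i j = α {i} * β {j} - α {j} * β {i} := by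
  have hpair {a b : Fin n} (hab : a < b) :
      wedge α β {a, b} = α {a} * β {b} - α {b} * β {a} := by
    have hsa : ({a, b} : Finset (Fin n)) \ {a} = {b} := by grind
    have hsb : ({a, b} : Finset (Fin n)) \ {b} = {a} := by grind
    rw [hα.wedge_apply, Finset.powersetCard_one, Finset.sum_map, Finset.sum_pair hab.ne]
    simp only [Function.Embedding.coeFn_mk, hsa, hsb, signMerge_singleton, hab, hab.not_gt, if_true,
      if_false]
    ring
  rcases lt_trichotomy i j with h | rfl | h
  · rw [mat2_of_lt _ h, hpair h]
  · rw [mat2_self, sub_self]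
  · rw [mat2_of_gt _ h, mat2_of_lt _ h, hpair h, neg_sub]

lemma isGrade_sum_wedge_e1 {ι κ : Type*} [Fintype ι] [Fintype κ] (c : ι → κ → 𝕜) (u : ι → Fin n)
    (v : κ → Fin n) : isGrade 2 (∑ a, ∑ b, c a b • wedge (e1 (u a) : Form 𝕜 n) (e1 (v b))) :=
  .sum fun _ _ => .sum fun _ _ => ((isGrade_e1 _).wedge (isGrade_e1 _)).smul _

lemma mat2_sum_wedge_e1 {ι κ : Type*} [Fintype ι] [Fintype κ] (c : ι → κ → 𝕜) (u : ι → Fin n)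
    (v : κ → Fin n) (i j : Fin n) :
    mat2 (∑ a, ∑ b, c a b • wedge (e1 (u a) : Form 𝕜 n) (e1 (v b))) i j =
      ∑ a, ∑ b, c a b * ((if i = u a ∧ j = v b then 1 else 0) -
        if j = u a ∧ i = v b then 1 else 0) := by
  let mat2Hom : Form 𝕜 n →+ Matrix (Fin n) (Fin n) 𝕜 := AddMonoidHom.mk' mat2 mat2_add
  have hsum : mat2 (∑ a, ∑ b, c a b • wedge (e1 (u a) : Form 𝕜 n) (e1 (v b))) =
      ∑ a, ∑ b, c a b • mat2 (wedge (e1 (u a) : Form 𝕜 n) (e1 (v b))) := by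
    simp only [← mat2_smul]
    exact (map_sum mat2Hom _ _).trans (Finset.sum_congr rfl fun a _ => map_sum mat2Hom _ _)
  simp only [hsum, Matrix.sum_apply, Matrix.smul_apply, (isGrade_e1 _).mat2_wedge, e1,
    Finset.singleton_inj, smul_eq_mul, ite_and, ite_mul, one_mul, zero_mul]

lemma isGrade.wedge_eq_sum_pairs {k : ℕ} {α : Form 𝕜 n} (hα : isGrade k α) (β : Form 𝕜 n)
    {u : Finset (Fin n)} {P : Finset (Finset (Fin n) × Finset (Fin n))}
    (hP : (u.powersetCard k).image (fun s => (s, u \ s)) = P) :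
    wedge α β u = ∑ q ∈ P, signMerge q.1 q.2 * α q.1 * β q.2 := by
  rw [hα.wedge_apply, ← hP, Finset.sum_image fun _ _ _ _ h => congrArg Prod.fst h]

lemma isGrade.wedge_self_univ_four {γ : Form 𝕜 4} (hγ : isGrade 2 γ) :
    wedge γ γ Finset.univ = 2 * pfaffian4 (mat2 γ) := by
  rw [hγ.wedge_eq_sum_pairs (P := {({0, 1}, {2, 3}), ({0, 2}, {1, 3}), ({0, 3}, {1, 2}),
    ({1, 2}, {0, 3}), ({1, 3}, {0, 2}), ({2, 3}, {0, 1})}) γ (by decide)]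
  repeat rw [Finset.sum_insert (by decide)]
  simp (decide := true) only [signMerge_eq_ite, if_true, if_false, Finset.sum_singleton, pfaffian4,
    mat2, Matrix.of_apply]
  ring

lemma isGrade.wedge_self_apply {γ : Form 𝕜 n} (hγ : isGrade 2 γ) {i j k l : Fin n} (hij : i < j)
    (hjk : j < k) (hkl : k < l) : wedge γ γ {i, j, k, l} =
      2 * pfaffian4 ((mat2 γ).submatrix ![i, j, k, l] ![i, j, k, l]) := by
  have hmono : StrictMono ![i, j, k, l] := by
    rw [Fin.strictMono_iff_lt_succ]
    intro a
    fin_cases a <;> simpa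
  let e := OrderEmbedding.ofStrictMono _ hmono
  have himage : {i, j, k, l} = Finset.univ.map e.toEmbedding := by
    ext a
    simp [e, Fin.exists_fin_succ, eq_comm]
  rw [himage]
  refine (congrFun (pullback_wedge e γ γ) Finset.univ).trans ?_
  rw [(hγ.pullback e).wedge_self_univ_four, mat2_pullback]
  rfl

lemma isGrade.wedge_cube_univ_six {γ : Form 𝕜 6} (hγ : isGrade 2 γ) :
    wedge γ (wedge γ γ) Finset.univ = 6 * pfaffian6 (mat2 γ) := by
  rw [hγ.wedge_eq_sum_pairs (P := {({0, 1}, {2, 3, 4, 5}), ({0, 2}, {1, 3, 4, 5}),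
    ({0, 3}, {1, 2, 4, 5}), ({0, 4}, {1, 2, 3, 5}), ({0, 5}, {1, 2, 3, 4}), ({1, 2}, {0, 3, 4, 5}),
    ({1, 3}, {0, 2, 4, 5}), ({1, 4}, {0, 2, 3, 5}), ({1, 5}, {0, 2, 3, 4}), ({2, 3}, {0, 1, 4, 5}),
    ({2, 4}, {0, 1, 3, 5}), ({2, 5}, {0, 1, 3, 4}), ({3, 4}, {0, 1, 2, 5}), ({3, 5}, {0, 1, 2, 4}),
    ({4, 5}, {0, 1, 2, 3})}) _ (by decide)]
  repeat rw [Finset.sum_insert (by decide)]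
  simp (decide := true) only [signMerge_eq_ite, if_true, if_false, Finset.sum_singleton,
    hγ.wedge_self_apply]
  simp (decide := true) only [pfaffian6_eq, pfaffian4, mat2, Matrix.of_apply, if_true, if_false,
    Matrix.submatrix_apply, Matrix.cons_val]
  ring

lemma isGrade.wedge_cube_compl_singleton {γ : Form 𝕜 7} (hγ : isGrade 2 γ) (p : Fin 7) :
    wedge γ (wedge γ γ) {p}ᶜ =
      6 * pfaffian6 ((mat2 γ).submatrix p.succAbove p.succAbove) := by
  have hcompl : ({p}ᶜ : Finset (Fin 7)) = Finset.univ.map p.succAboveOrderEmb.toEmbedding := by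
    ext q
    simp only [Finset.mem_compl, Finset.mem_singleton, Finset.mem_map, Finset.mem_univ, true_and,
      RelEmbedding.coe_toEmbedding, Fin.succAboveOrderEmb_apply]
    exact Fin.exists_succAbove_eq_iff.symm
  rw [hcompl]
  refine (congrFun (pullback_wedge p.succAboveOrderEmb γ (wedge γ γ)) Finset.univ).trans ?_
  rw [pullback_wedge, (hγ.pullback _).wedge_cube_univ_six, mat2_pullback]
  rfl

lemma isGrade.signMerge_mul_wedge_self_insert {γ : Form 𝕜 n} (hγ : isGrade 2 γ) {i j k : Fin n}
    (hij : i < j) (hjk : j < k) (p : Fin n) :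
    (if p ∉ ({i, j, k} : Finset (Fin n)) then
      signMerge {p} {i, j, k} * wedge γ γ (insert p {i, j, k}) else 0) =
      2 * pfaffian4 ((mat2 γ).submatrix ![p, i, j, k] ![p, i, j, k]) := by
  simp only [signMerge_singleton_triple p hij hjk, pfaffian4, Matrix.submatrix_apply,
    Matrix.cons_val, Finset.mem_insert, Finset.mem_singleton, not_or]
  rcases lt_trichotomy p i with hpi | rfl | hip
  · have hpj := hpi.trans hij
    have hpk := hpj.trans hjk
    simp [hγ.wedge_self_apply hpi hij hjk, pfaffian4, hpi.ne, hpj.ne, hpk.ne, hpi.not_gt,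
      hpj.not_gt, hpk.not_gt]
  · simp only [mat2_self, not_true_eq_false, false_and, if_false]
    ring
  have hpi := mat2_of_gt γ hip
  rcases lt_trichotomy p j with hpj | rfl | hjp
  · have hpk := hpj.trans hjk
    simp only [Finset.insert_comm p i, hγ.wedge_self_apply hip hpj hjk, pfaffian4, hip.ne', hpj.ne,
      hpk.ne, hip, hpj.not_gt, hpk.not_gt, hpi, not_false_eq_true, and_self, if_true, if_false,
      Matrix.submatrix_apply, Matrix.cons_val]
    ring
  · simp only [mat2_self, hpi, not_true_eq_false, false_and, and_false, if_false]
    ring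
  have hpj := mat2_of_gt γ hjp
  rcases lt_trichotomy p k with hpk | rfl | hkp
  · simp only [Finset.insert_comm p i, Finset.insert_comm p j, hγ.wedge_self_apply hij hjp hpk,
      pfaffian4, hip.ne', hjp.ne', hpk.ne, hip, hjp, hpk.not_gt, hpi, hpj, not_false_eq_true,
      and_self, if_true, if_false, Matrix.submatrix_apply, Matrix.cons_val]
    ring
  · simp only [mat2_self, hpi, hpj, not_true_eq_false, and_false, if_false]
    ring
  · simp only [Finset.insert_comm p i, Finset.insert_comm p j, Finset.pair_comm p k,
      hγ.wedge_self_apply hij hjk hkp, pfaffian4, hip.ne', hjp.ne', hkp.ne', hip, hjp, hkp, hpi,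
      hpj, mat2_of_gt γ hkp, not_false_eq_true, and_self, if_true, Matrix.submatrix_apply,
      Matrix.cons_val]
    ring

lemma isGrade.wedge_phi7_hstar_wedge_self {γ : Form 𝕜 7} (hγ : isGrade 2 γ) (p : Fin 7) :
    wedge phi7 (hstar (wedge γ γ)) {p}ᶜ =
      (-1) ^ (p : ℕ) * (2 * (mat2 γ).mulVec (phiContr (mat2 γ)) p) := by
  have hsum : ∑ s with p ∉ s, signMerge {p} s * phi7 s * wedge γ γ (insert p s) =
      ∑ s, phi7 s * if p ∉ s then signMerge {p} s * wedge γ γ (insert p s) else 0 := by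
    rw [Finset.sum_filter]
    refine Finset.sum_congr rfl fun s _ => ?_
    split_ifs <;> ring
  rw [wedge_hstar_compl_singleton, hsum, sum_phi7_mul]
  simp (decide := true) only [hγ.signMerge_mul_wedge_self_insert, pfaffian4, phiContr,
    Matrix.mulVec, dotProduct, Fin.sum_univ_seven, Matrix.submatrix_apply, Matrix.cons_val,
    mat2_of_gt γ]
  ring

lemma signMerge_mul_erase (γ : Form 𝕜 n) {i j k : Fin n} (hij : i < j) (hjk : j < k) (p : Fin n) :
    (if p ∈ ({i, j, k} : Finset (Fin n)) then
      signMerge {p} (({i, j, k} : Finset (Fin n)).erase p) *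
        γ (({i, j, k} : Finset (Fin n)).erase p) else 0) =
      (if p = i then mat2 γ j k else 0) + (if p = j then mat2 γ k i else 0) +
        if p = k then mat2 γ i j else 0 := by
  have hik := hij.trans hjk
  by_cases hpi : p = i
  · subst hpi
    rw [Finset.erase_insert (by simp [hij.ne, hik.ne]),
      signMerge_singleton_insert p (by simp [hjk.ne]), signMerge_singleton]
    simp [hij.ne, hik.ne, hij.not_gt, hik.not_gt, mat2_of_lt γ hjk]
  by_cases hpj : p = j
  · subst hpj
    rw [Finset.insert_comm, Finset.erase_insert (by simp [hij.ne', hjk.ne]),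
      signMerge_singleton_insert p (by simp [hik.ne]), signMerge_singleton]
    simp [hpi, hjk.ne, hij, hjk.not_gt, mat2_of_gt γ hik, mat2_of_lt γ hik]
  by_cases hpk : p = k
  · subst hpk
    rw [Finset.pair_comm, Finset.insert_comm, Finset.erase_insert (by simp [hik.ne', hjk.ne']),
      signMerge_singleton_insert p (by simp [hij.ne]), signMerge_singleton]
    simp [hpi, hpj, hik, hjk, mat2_of_lt γ hij]
  · simp [hpi, hpj, hpk]

lemma wedge_psi7_compl_singleton (γ : Form 𝕜 7) (p : Fin 7) :
    wedge γ psi7 {p}ᶜ = (-1) ^ (p : ℕ) * phiContr (mat2 γ) p := by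
  have hsum : ∑ s with p ∉ s, signMerge {p} s * γ s * phi7 (insert p s) =
      ∑ r, phi7 r * if p ∈ r then signMerge {p} (r.erase p) * γ (r.erase p) else 0 := by
    simp only [mul_ite, mul_zero, ← Finset.sum_filter]
    refine Finset.sum_nbij' (insert p) (·.erase p) ?_ ?_ ?_ ?_ ?_ <;>
      simp +contextual only [Finset.mem_filter, Finset.mem_univ, true_and, Finset.mem_insert_self,
        Finset.notMem_erase, not_false_eq_true, Finset.erase_insert, Finset.insert_erase,
        implies_true]
    intro s _
    ring
  rw [← hstar_phi7, wedge_hstar_compl_singleton, hsum, sum_phi7_mul]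
  congr 1
  simp (decide := true) only [signMerge_mul_erase γ, phiContr, mat2_of_gt γ]
  fin_cases p <;> simp <;> ring

lemma isGrade.eq_zero_iff_compl_singleton {k : ℕ} {α : Form 𝕜 (k + 1)} (hα : isGrade k α) :
    α = 0 ↔ ∀ p, α {p}ᶜ = 0 := by
  refine ⟨fun h p => by rw [h, Pi.zero_apply], fun h => funext fun s => ?_⟩
  by_cases hs : s.card = k
  · obtain ⟨p, hp⟩ : ∃ p, sᶜ = {p} :=
      Finset.card_eq_one.mp (by rw [Finset.card_compl, Fintype.card_fin, hs]; omega)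
    rw [← compl_compl s, hp, h p, Pi.zero_apply]
  · exact hα s hs

lemma isGrade_psi7 : isGrade 4 (psi7 : Form 𝕜 7) :=
  hstar_phi7 (𝕜 := 𝕜) ▸ isGrade_phi7.hstar rfl

/-- The curvature equation `F³/6 + F ∧ *₇φ = 0` of deformed Donaldson-Thomas connections on a
`G₂` manifold. -/
def IsDeformedDonaldsonThomas (F : Form 𝕜 7) : Prop :=
  (6 : 𝕜)⁻¹ • wedge F (wedge F F) + wedge F psi7 = 0

lemma isGrade.isDeformedDonaldsonThomas_iff [CharZero 𝕜] {F : Form 𝕜 7} (hF : isGrade 2 F) :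
    IsDeformedDonaldsonThomas F ↔ pfaffianVec (mat2 F) + phiContr (mat2 F) = 0 := by
  have hgrade : isGrade 6 ((6 : 𝕜)⁻¹ • wedge F (wedge F F) + wedge F psi7) :=
    ((hF.wedge (hF.wedge hF)).smul _).add (hF.wedge isGrade_psi7)
  rw [IsDeformedDonaldsonThomas, hgrade.eq_zero_iff_compl_singleton, funext_iff]
  refine forall_congr' fun p => ?_
  have hunit : ((-1) ^ (p : ℕ) : 𝕜) * (-1) ^ (p : ℕ) = 1 := by
    rw [← mul_pow, neg_one_mul, neg_neg, one_pow]
  rw [Pi.add_apply, Pi.smul_apply, hF.wedge_cube_compl_singleton, wedge_psi7_compl_singleton,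
    smul_eq_mul, inv_mul_cancel_left₀ (OfNat.ofNat_ne_zero 6), Pi.add_apply, pfaffianVec,
    Pi.zero_apply, ← mul_right_inj' (left_ne_zero_of_mul_eq_one hunit), mul_zero, mul_add,
    ← mul_assoc, hunit, one_mul]

lemma IsDeformedDonaldsonThomas.wedge_phi7_hstar_wedge_self_eq_zero [CharZero 𝕜] {F : Form 𝕜 7}
    (h : IsDeformedDonaldsonThomas F) (hF : isGrade 2 F) :
    wedge phi7 (hstar (wedge F F)) = 0 := by
  have hgrade : isGrade 6 (wedge phi7 (hstar (wedge F F))) :=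
    isGrade_phi7.wedge (l := 3) ((hF.wedge hF).hstar rfl)
  refine hgrade.eq_zero_iff_compl_singleton.mpr fun p => ?_
  have hkernel : (mat2 F).mulVec (phiContr (mat2 F)) = 0 := by
    rw [eq_neg_of_add_eq_zero_right (hF.isDeformedDonaldsonThomas_iff.mp h), Matrix.mulVec_neg,
      mulVec_pfaffianVec (fun _ _ => mat2_of_gt F) (mat2_self F), neg_zero]
  rw [hF.wedge_phi7_hstar_wedge_self, hkernel, Pi.zero_apply, mul_zero, mul_zero]

end TwoForms

section PlaneCoords

variable {𝕜 : Type*} [NormedField 𝕜]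

/-- The coordinates of a 2-form on four-space in the basis of oriented coordinate planes `plane`. -/
def planeCoords (β : Form 𝕜 4) : Fin 6 → 𝕜 := fun i => mat2 β (plane i).1 (plane i).2

lemma planeCoords_eq (β : Form 𝕜 4) :
    planeCoords β = ![β {0, 1}, β {0, 2}, β {0, 3}, β {2, 3}, -β {1, 3}, β {1, 2}] := by
  ext i
  fin_cases i <;> simp (decide := true) [planeCoords, plane, mat2, Finset.pair_comm]

lemma isGrade.eq_iff_planeCoords_eq {α β : Form 𝕜 4} (hα : isGrade 2 α) (hβ : isGrade 2 β) :
    α = β ↔ planeCoords α = planeCoords β := by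
  refine ⟨congrArg _, fun h => funext fun s => ?_⟩
  by_cases hs : s.card = 2
  · have hmem : s ∈ ({{0, 1}, {0, 2}, {0, 3}, {2, 3}, {1, 3}, {1, 2}} :
        Finset (Finset (Fin 4))) := by
      revert s
      decide
    simp only [planeCoords_eq, Matrix.vecCons_inj, neg_inj] at h
    simp only [Finset.mem_insert, Finset.mem_singleton] at hmem
    rcases hmem with rfl | rfl | rfl | rfl | rfl | rfl <;> simp only [h]
  · rw [hα s hs, hβ s hs]

lemma planeCoords_hstar (β : Form 𝕜 4) :
    planeCoords (hstar β) = planeStar.mulVec (planeCoords β) := by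
  have hcompl : ({0, 1}ᶜ : Finset (Fin 4)) = {2, 3} ∧ ({0, 2}ᶜ : Finset (Fin 4)) = {1, 3} ∧
      ({0, 3}ᶜ : Finset (Fin 4)) = {1, 2} ∧ ({2, 3}ᶜ : Finset (Fin 4)) = {0, 1} ∧
      ({1, 3}ᶜ : Finset (Fin 4)) = {0, 2} ∧ ({1, 2}ᶜ : Finset (Fin 4)) = {0, 3} := by
    decide
  ext i
  simp (decide := true) only [planeCoords_eq, hstar, planeStar, Matrix.permMatrix_mulVec, hcompl,
    signMerge_eq_ite, if_true, if_false]
  fin_cases i <;> simp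

lemma isGrade.sum_mul_univ_four {β : Form 𝕜 4} (hβ : isGrade 2 β) (g : Finset (Fin 4) → 𝕜) :
    ∑ s, β s * g s = β {0, 1} * g {0, 1} + β {0, 2} * g {0, 2} + β {0, 3} * g {0, 3}
      + β {1, 2} * g {1, 2} + β {1, 3} * g {1, 3} + β {2, 3} * g {2, 3} := by
  rw [← Finset.sum_subset (Finset.subset_univ ({{0, 1}, {0, 2}, {0, 3}, {1, 2}, {1, 3}, {2, 3}} :
    Finset (Finset (Fin 4))))]
  · repeat rw [Finset.sum_insert (by decide)]
    rw [Finset.sum_singleton]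
    ring
  · intro s _ hs
    rw [hβ s fun hcard => hs (by revert s; decide), zero_mul]

lemma planeCoords_smul (c : 𝕜) (β : Form 𝕜 4) :
    planeCoords (c • β) = c • planeCoords β := by
  simp [planeCoords_eq]

end PlaneCoords

section StarG

lemma minor2_pair (H : Matrix (Fin 4) (Fin 4) ℝ) {a b c d : Fin 4} (hab : a < b) (hcd : c < d) :
    minor2 H {a, b} {c, d} = H a c * H b d - H a d * H b c := by
  have hmono {i j : Fin 4} (hij : i < j) : StrictMono ![i, j] := by
    simpa [Fin.strictMono_iff_lt_succ] using hij
  have himage (i j : Fin 4) : Finset.univ.image ![i, j] = {i, j} := by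
    ext
    simp [eq_comm]
  rw [minor2, dif_pos (Finset.card_pair hab.ne), dif_pos (Finset.card_pair hcd.ne),
    Matrix.det_fin_two]
  simp only [Matrix.of_apply, coe_orderIsoOfFin_eq (hmono hab) (himage a b),
    coe_orderIsoOfFin_eq (hmono hcd) (himage c d), Matrix.cons_val]

lemma innerG2_indF (H : Matrix (Fin 4) (Fin 4) ℝ) (u : Finset (Fin 4)) (β : Form ℝ 4) :
    innerG2 H (indF u) β = ∑ t, β t * minor2 H u t := by
  simp [innerG2, indF]

lemma planeCoords_innerG2_indF (H : Matrix (Fin 4) (Fin 4) ℝ) {β : Form ℝ 4} (hβ : isGrade 2 β) :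
    planeCoords (fun u => innerG2 H (indF u) β) = (compound2 H).mulVec (planeCoords β) := by
  ext i
  simp (decide := true) only [planeCoords_eq, innerG2_indF, hβ.sum_mul_univ_four, minor2_pair]
  fin_cases i <;> simp [Matrix.mulVec, dotProduct, Fin.sum_univ_six, compound2, plane] <;> ring

lemma starG_eq_smul_hstar (G : Matrix (Fin 4) (Fin 4) ℝ) (ε : ℝ) (β : Form ℝ 4) :
    starG G ε β = (ε * √G.det) • hstar fun u => innerG2 G⁻¹ (indF u) β := by
  ext t
  simp only [starG, hstar, Pi.smul_apply, smul_eq_mul]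
  ring

lemma isGrade_innerG2_indF (H : Matrix (Fin 4) (Fin 4) ℝ) (β : Form ℝ 4) :
    isGrade 2 fun u => innerG2 H (indF u) β := by
  intro u hu
  simp only [innerG2_indF, minor2, dif_neg hu, mul_zero, Finset.sum_const_zero]

lemma starG_eq_neg_iff (G : Matrix (Fin 4) (Fin 4) ℝ) (ε : ℝ) {β : Form ℝ 4} (hβ : isGrade 2 β) :
    starG G ε β = -β ↔
      (ε * √G.det) • planeStar.mulVec ((compound2 G⁻¹).mulVec (planeCoords β)) =
        -planeCoords β := by
  have hgrade := ((isGrade_innerG2_indF G⁻¹ β).hstar (l := 2) rfl).smul (ε * √G.det)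
  rw [starG_eq_smul_hstar, ← neg_one_smul ℝ β, hgrade.eq_iff_planeCoords_eq (hβ.smul _),
    planeCoords_smul, planeCoords_smul, planeCoords_hstar, planeCoords_innerG2_indF _ hβ,
    neg_one_smul]

end StarG

section Graph

variable {R : Type*} [CommRing R]

/-- The frame `(P a, e_a)` of the graph of a linear map `R⁴ → R³` with Jacobian matrix `P`, where
the first three coordinates of `R⁷` are those of `R³`. -/
def graphFrame (P : Matrix (Fin 4) (Fin 3) R) : Fin 4 → Fin 7 → R :=
  ![![P 0 0, P 0 1, P 0 2, 1, 0, 0, 0], ![P 1 0, P 1 1, P 1 2, 0, 1, 0, 0],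
    ![P 2 0, P 2 1, P 2 2, 0, 0, 1, 0], ![P 3 0, P 3 1, P 3 2, 0, 0, 0, 1]]

/-- The matrix of the Fourier-Mukai 2-form
`∑ (∂f^j/∂y^a) dy^a ∧ dx^j + ∑ (∂A^b/∂y^a) dy^a ∧ dy^b` with `P a j = ∂f^j/∂y^a` and
`Q a b = ∂A^b/∂y^a`. -/
def graphMatrix (P : Matrix (Fin 4) (Fin 3) R) (Q : Matrix (Fin 4) (Fin 4) R) :
    Matrix (Fin 7) (Fin 7) R :=
  !![0, 0, 0, -P 0 0, -P 1 0, -P 2 0, -P 3 0;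
     0, 0, 0, -P 0 1, -P 1 1, -P 2 1, -P 3 1;
     0, 0, 0, -P 0 2, -P 1 2, -P 2 2, -P 3 2;
     P 0 0, P 0 1, P 0 2, 0, Q 0 1 - Q 1 0, Q 0 2 - Q 2 0, Q 0 3 - Q 3 0;
     P 1 0, P 1 1, P 1 2, Q 1 0 - Q 0 1, 0, Q 1 2 - Q 2 1, Q 1 3 - Q 3 1;
     P 2 0, P 2 1, P 2 2, Q 2 0 - Q 0 2, Q 2 1 - Q 1 2, 0, Q 2 3 - Q 3 2;
     P 3 0, P 3 1, P 3 2, Q 3 0 - Q 0 3, Q 3 1 - Q 1 3, Q 3 2 - Q 2 3, 0]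

/-- The coordinates, in the basis `plane`, of the skew-symmetric part `Q - Qᵀ`. -/
def planeSkew (Q : Matrix (Fin 4) (Fin 4) R) : Fin 6 → R :=
  fun i => Q (plane i).1 (plane i).2 - Q (plane i).2 (plane i).1

end Graph

section GraphFrame

variable {𝕜 : Type*} [NormedField 𝕜] (P : Matrix (Fin 4) (Fin 3) 𝕜) (Q : Matrix (Fin 4) (Fin 4) 𝕜)

lemma phiContr_sub_pfaffianVec_ya (a : Fin 4) :
    (phiContr (graphMatrix P Q) - pfaffianVec (graphMatrix P Q)) (ya a) =
      (-1) ^ (a : ℕ) * evalForm phi7 (graphFrame P ∘ a.succAbove) := by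
  rw [Pi.sub_apply, pfaffianVec, pfaffian6_eq, evalForm_phi7]
  fin_cases a <;>
    simp [ya, phiContr, graphMatrix, graphFrame, Fin.succAbove, Matrix.det_fin_three] <;> ring

lemma phiContr_sub_pfaffianVec_xj (j : Fin 3) :
    (phiContr (graphMatrix P Q) - pfaffianVec (graphMatrix P Q)) (xj j) =
      (planeCross (graphFrame P)).mulVec (planeStar.mulVec (planeSkew Q)) (xj j) := by
  rw [Pi.sub_apply, pfaffianVec, pfaffian6_eq]
  fin_cases j <;>
    simp [xj, phiContr, graphMatrix, graphFrame, Fin.succAbove, planeStar, planeSkew, plane,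
      Matrix.mulVec, dotProduct, Fin.sum_univ_six, planeCross, cross7, Matrix.vecMulVec_apply] <;>
    ring

lemma isCoassociative_iff_succAbove (w : Fin 4 → Fin 7 → 𝕜) :
    IsCoassociative w ↔ ∀ a : Fin 4, evalForm phi7 (w ∘ a.succAbove) = 0 := by
  have htriple (a : Fin 4) : w ∘ a.succAbove =
      ![w (a.succAbove 0), w (a.succAbove 1), w (a.succAbove 2)] := by
    ext i
    fin_cases i <;> rfl
  simp only [htriple]
  refine ⟨fun h a => h _ _ _ (a.strictMono_succAbove (by decide))
    (a.strictMono_succAbove (by decide)), fun h a b c hab hbc => ?_⟩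
  obtain ⟨d, rfl, rfl, rfl⟩ : ∃ d : Fin 4, d.succAbove 0 = a ∧ d.succAbove 1 = b ∧
      d.succAbove 2 = c := by
    revert a b c
    decide
  exact h d

lemma eq_zero_iff_xj_ya {v : Fin 7 → 𝕜} :
    v = 0 ↔ (∀ j, v (xj j) = 0) ∧ ∀ a, v (ya a) = 0 := by
  simp [funext_iff, Fin.forall_fin_succ, xj, ya, and_assoc]

lemma graphFrame_dotProduct (P : Matrix (Fin 4) (Fin 3) 𝕜) (a : Fin 4) (v : Fin 7 → 𝕜) :
    graphFrame P a ⬝ᵥ v = ∑ j, P a j * v (xj j) + v (ya a) := by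
  fin_cases a <;> simp [graphFrame, dotProduct, Fin.sum_univ_succ, xj, ya] <;> ring

lemma linearIndependent_graphFrame (P : Matrix (Fin 4) (Fin 3) 𝕜) :
    LinearIndependent 𝕜 (graphFrame P) := by
  have hya (a b : Fin 4) : graphFrame P a (ya b) = (1 : Matrix (Fin 4) (Fin 4) 𝕜) a b := by
    fin_cases a <;> fin_cases b <;> rfl
  refine Fintype.linearIndependent_iff.mpr fun c hc b => ?_
  simpa [hya, Matrix.one_apply] using congrFun hc (ya b)

lemma eq_zero_iff_xj_of_mulVec_graphFrame {P : Matrix (Fin 4) (Fin 3) 𝕜} {v : Fin 7 → 𝕜}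
    (h : (Matrix.of (graphFrame P)).mulVec v = 0) : v = 0 ↔ ∀ j, v (xj j) = 0 := by
  refine ⟨fun hv j => congrFun hv _, fun hv => eq_zero_iff_xj_ya.mpr ⟨hv, fun a => ?_⟩⟩
  have hdot := (graphFrame_dotProduct P a v).symm.trans (congrFun h a)
  simpa only [hv, mul_zero, Finset.sum_const_zero, zero_add, Pi.zero_apply] using hdot

lemma isCoassociative_graphFrame_and_iff (P : Matrix (Fin 4) (Fin 3) 𝕜)
    (Q : Matrix (Fin 4) (Fin 4) 𝕜) :
    (IsCoassociative (graphFrame P) ∧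
        (planeCross (graphFrame P)).mulVec (planeStar.mulVec (planeSkew Q)) = 0) ↔
      phiContr (graphMatrix P Q) - pfaffianVec (graphMatrix P Q) = 0 := by
  rw [eq_zero_iff_xj_ya (v := phiContr _ - _), and_comm (a := ∀ _, _)]
  have hya : IsCoassociative (graphFrame P) ↔
      ∀ a, (phiContr (graphMatrix P Q) - pfaffianVec (graphMatrix P Q)) (ya a) = 0 := by
    simp only [isCoassociative_iff_succAbove, phiContr_sub_pfaffianVec_ya, mul_eq_zero,
      pow_eq_zero_iff', neg_eq_zero, one_ne_zero, false_and, false_or]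
  rw [← hya]
  refine and_congr_right fun h => ?_
  simp only [phiContr_sub_pfaffianVec_xj]
  refine eq_zero_iff_xj_of_mulVec_graphFrame (P := P) ?_
  rw [Matrix.mulVec_mulVec, h.mul_planeCross, Matrix.zero_mulVec]

end GraphFrame

section Imaginary

/-- The form `√-1 γ` with imaginary values defined by a real form `γ`. -/
def imForm (γ : Form ℝ n) : Form ℂ n := fun s => Complex.I * (γ s : ℂ)

lemma imForm_add (α β : Form ℝ n) : imForm (α + β) = imForm α + imForm β := by
  ext s
  simp [imForm, mul_add]

protected lemma isGrade.imForm {k : ℕ} {γ : Form ℝ n} (hγ : isGrade k γ) :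
    isGrade k (imForm γ) := by
  intro s hs
  rw [FMpaper.imForm, hγ s hs, Complex.ofReal_zero, mul_zero]

lemma mat2_imForm (γ : Form ℝ n) :
    mat2 (imForm γ) = Complex.I • (mat2 γ).map Complex.ofRealHom := by
  ext i j
  simp only [mat2, imForm, Matrix.of_apply, Matrix.smul_apply, Matrix.map_apply, smul_eq_mul]
  split_ifs <;> simp

lemma isGrade.isDeformedDonaldsonThomas_imForm_iff {γ : Form ℝ 7} (hγ : isGrade 2 γ) :
    IsDeformedDonaldsonThomas (imForm γ) ↔ phiContr (mat2 γ) - pfaffianVec (mat2 γ) = 0 := by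
  rw [hγ.imForm.isDeformedDonaldsonThomas_iff, mat2_imForm, pfaffianVec_smul, phiContr_smul,
    pfaffianVec_map, phiContr_map, funext_iff, funext_iff]
  refine forall_congr' fun p => ?_
  have hfactor : Complex.I ^ 3 * ((pfaffianVec (mat2 γ) p : ℝ) : ℂ) +
      Complex.I * ((phiContr (mat2 γ) p : ℝ) : ℂ) =
      Complex.I * ((phiContr (mat2 γ) p - pfaffianVec (mat2 γ) p : ℝ) : ℂ) := by
    rw [Complex.I_pow_three, Complex.ofReal_sub]
    ring
  simp only [Pi.add_apply, Pi.smul_apply, Pi.sub_apply, Pi.zero_apply, Function.comp_apply,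
    Complex.ofRealHom_eq_coe, smul_eq_mul, hfactor, mul_eq_zero, Complex.I_ne_zero, false_or,
    Complex.ofReal_eq_zero]

end Imaginary

section FourierMukai

variable (f : (Fin 4 → ℝ) → (Fin 3 → ℝ)) (A : (Fin 4 → ℝ) → (Fin 4 → ℝ)) (y : Fin 4 → ℝ)

/-- The Jacobian matrix `J a j = ∂f^j/∂y^a`. -/
def jacobian {m p : ℕ} (f : (Fin m → ℝ) → (Fin p → ℝ)) (y : Fin m → ℝ) :
    Matrix (Fin m) (Fin p) ℝ :=
  Matrix.of (pd f y)

lemma wC_eq_graphFrame : wC f y = graphFrame (jacobian f y) := by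
  ext a k
  fin_cases a <;> fin_cases k <;>
    simp [wC, graphFrame, jacobian, ya, xj, Fin.sum_univ_three]

lemma mat2_gammaBC_add_gammaC :
    mat2 (gammaBC A y + gammaC f y) = graphMatrix (jacobian f y) (jacobian A y) := by
  ext i j
  rw [mat2_add, gammaC, Finset.sum_comm]
  simp only [Matrix.add_apply, gammaBC, mat2_sum_wedge_e1]
  fin_cases i <;> fin_cases j <;>
    simp [ya, xj, Fin.sum_univ_three, Fin.sum_univ_four, graphMatrix, jacobian] <;> ring

lemma isGrade_betaC : isGrade 2 (betaC A y) :=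
  isGrade_sum_wedge_e1 _ _ _

lemma planeCoords_betaC : planeCoords (betaC A y) = planeSkew (jacobian A y) := by
  ext i
  simp [planeCoords, betaC, mat2_sum_wedge_e1, planeSkew, jacobian, mul_sub, ite_and]

lemma isGrade_gammaBC_add_gammaC : isGrade 2 (gammaBC A y + gammaC f y) := by
  refine (isGrade_sum_wedge_e1 _ _ _).add ?_
  rw [gammaC, Finset.sum_comm]
  exact isGrade_sum_wedge_e1 _ _ _

lemma FBC_add_FSC_eq_imForm : FBC A y + FSC f y = imForm (gammaBC A y + gammaC f y) :=
  (imForm_add _ _).symm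

lemma isGrade_FBC_add_FSC : isGrade 2 (FBC A y + FSC f y) :=
  FBC_add_FSC_eq_imForm f A y ▸ (isGrade_gammaBC_add_gammaC f A y).imForm

lemma isCoassociative_and_antiSelfDual_iff_isDeformedDonaldsonThomas :
    (IsCoassociative (wC f y) ∧ starG (gramC f y) (epsC f y) (betaC A y) = -betaC A y) ↔
      IsDeformedDonaldsonThomas (FBC A y + FSC f y) := by
  have hasd (h : IsCoassociative (graphFrame (jacobian f y))) :=
    h.antiSelfDual_iff (linearIndependent_graphFrame _) (planeSkew (jacobian A y))
  rw [FBC_add_FSC_eq_imForm,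
    (isGrade_gammaBC_add_gammaC f A y).isDeformedDonaldsonThomas_imForm_iff,
    mat2_gammaBC_add_gammaC, ← isCoassociative_graphFrame_and_iff,
    starG_eq_neg_iff _ _ (isGrade_betaC A y), planeCoords_betaC, epsC,
    show gramC f y = gram7 (wC f y) from rfl, wC_eq_graphFrame]
  exact and_congr_right hasd

end FourierMukai

theorem statement14_general (B : Set (Fin 4 → ℝ))
    (f : (Fin 4 → ℝ) → (Fin 3 → ℝ)) (_hf : ∀ y ∈ B, DifferentiableAt ℝ f y)
    (A : (Fin 4 → ℝ) → (Fin 4 → ℝ)) (_hA : ∀ y ∈ B, DifferentiableAt ℝ A y) :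
    (((∀ y ∈ B, IsCoassociative (wC f y)) ∧
      (∀ y ∈ B, starG (gramC f y) (epsC f y) (betaC A y) = - betaC A y)) ↔
      (∀ y ∈ B, IsDeformedDonaldsonThomas (FBC A y + FSC f y))) ∧
    (((∀ y ∈ B, IsCoassociative (wC f y)) ∧
      (∀ y ∈ B, starG (gramC f y) (epsC f y) (betaC A y) = - betaC A y)) ↔
      (∀ y ∈ B, IsDeformedDonaldsonThomas (FBC A y + FSC f y) ∧
        wedge phi7 (hstar (wedge (FBC A y + FSC f y) (FBC A y + FSC f y))) = 0)) := by
  have hdDT :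
      (∀ y ∈ B, IsCoassociative (wC f y)) ∧
        (∀ y ∈ B, starG (gramC f y) (epsC f y) (betaC A y) = - betaC A y) ↔
      ∀ y ∈ B, IsDeformedDonaldsonThomas (FBC A y + FSC f y) := by
    rw [← forall₂_and]
    exact forall₂_congr fun y _ =>
      isCoassociative_and_antiSelfDual_iff_isDeformedDonaldsonThomas f A y
  refine ⟨hdDT, hdDT.trans (forall₂_congr fun y _ => ?_)⟩
  exact (and_iff_left_of_imp fun h =>
    h.wedge_phi7_hstar_wedge_self_eq_zero (isGrade_FBC_add_FSC f A y)).symm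

/-- Proposition 6.2.  The following are equivalent:
(1) the graph `S` is coassociative with an appropriate orientation and `β = -√-1 F_∇^B`
is anti-self-dual with respect to the induced metric and the orientation making `S`
coassociative;
(2) `F_∇³/6 + F_∇ ∧ *₇φ = 0` on `B`;
(3) `F_∇³/6 + F_∇ ∧ *₇φ = 0` and `φ ∧ *₇(F_∇²) = 0` on `B`,
where `F_∇ = F_∇^B + F_∇^S`. -/
theorem statement14 (B : Set (Fin 4 → ℝ)) (hB : IsOpen B)
    (f : (Fin 4 → ℝ) → (Fin 3 → ℝ)) (hf : ContDiffOn ℝ (⊤ : ℕ∞) f B)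
    (A : (Fin 4 → ℝ) → (Fin 4 → ℝ)) (hA : ContDiffOn ℝ (⊤ : ℕ∞) A B) :
    (((∀ y ∈ B, ∀ a b c : Fin 4, a < b → b < c →
        evalForm phi7 ![wC f y a, wC f y b, wC f y c] = 0) ∧
      (∀ y ∈ B, starG (gramC f y) (epsC f y) (betaC A y) = - betaC A y)) ↔
      (∀ y ∈ B,
        (6 : ℂ)⁻¹ • wedge (FBC A y + FSC f y)
            (wedge (FBC A y + FSC f y) (FBC A y + FSC f y)) +
          wedge (FBC A y + FSC f y) psi7 = 0)) ∧
    (((∀ y ∈ B, ∀ a b c : Fin 4, a < b → b < c →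
        evalForm phi7 ![wC f y a, wC f y b, wC f y c] = 0) ∧
      (∀ y ∈ B, starG (gramC f y) (epsC f y) (betaC A y) = - betaC A y)) ↔
      (∀ y ∈ B,
        ((6 : ℂ)⁻¹ • wedge (FBC A y + FSC f y)
            (wedge (FBC A y + FSC f y) (FBC A y + FSC f y)) +
          wedge (FBC A y + FSC f y) psi7 = 0) ∧
        wedge phi7 (hstar (wedge (FBC A y + FSC f y) (FBC A y + FSC f y))) = 0)) :=
  statement14_general B f
    (fun _ hy => (hf.contDiffAt (hB.mem_nhds hy)).differentiableAt (by simp)) A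
    (fun _ hy => (hA.contDiffAt (hB.mem_nhds hy)).differentiableAt (by simp))

end FMpaper
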